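/- Let G be a countable residually finite non-amenable group. Then there exists a rooted action G ↷ T on a countable tree and a Borel probability measure μ on the Gromov boundary ∂T such that the induced boundary action G ↷ ∂T is free and μ-preserving, and the orbit equivalence relation E_G^{∂T} is not μ-hyperfinite. -/

import Mathlib

open MeasureTheory Function Filter

/-! ### Countable Borel equivalence relations -/

section CBER

variable {X Y : Type*} [MeasurableSpace X] [MeasurableSpace Y]

/-- A countable Borel equivalence relation on a standard Borel space. -/
def IsCBER (E : X → X → Prop) : Prop :=
  Equivalence E ∧ MeasurableSet {p : X × X | E p.1 p.2} ∧ ∀ x : X, {y | E x y}.Countable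

/-- `B` meets every `E`-class in exactly one point. -/
def IsTransversal (E : X → X → Prop) (B : Set X) : Prop :=
  ∀ x : X, ∃! y : X, y ∈ B ∧ E x y

/-- A CBER is smooth if it admits a Borel transversal. -/
def SmoothRel (E : X → X → Prop) : Prop :=
  ∃ B : Set X, MeasurableSet B ∧ IsTransversal E B

/-- A Borel equivalence relation all of whose classes are finite. -/
def IsFiniteBorelEquivalence (E : X → X → Prop) : Prop :=
  Equivalence E ∧ MeasurableSet {p : X × X | E p.1 p.2} ∧ ∀ x : X, {y | E x y}.Finite

/-- A CBER is (Borel) hyperfinite if it is the increasing union of a sequence of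
Borel equivalence relations with finite classes. -/
def Hyperfinite (E : X → X → Prop) : Prop :=
  ∃ F : ℕ → X → X → Prop,
    (∀ i, IsFiniteBorelEquivalence (F i)) ∧
    (∀ i x y, F i x y → F (i + 1) x y) ∧
    (∀ x y, E x y ↔ ∃ i, F i x y)

/-- Borel reducibility of equivalence relations. -/
def BorelReducible (E : X → X → Prop) (F : Y → Y → Prop) : Prop :=
  ∃ f : X → Y, Measurable f ∧ ∀ x x' : X, E x x' ↔ F (f x) (f x')

/-- Borel bireducibility of equivalence relations. -/
def BorelBireducible (E : X → X → Prop) (F : Y → Y → Prop) : Prop :=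
  BorelReducible E F ∧ BorelReducible F E

/-- The saturation `[A]_E` of a set `A`: the smallest `E`-invariant set containing `A`. -/
def Saturation (E : X → X → Prop) (A : Set X) : Set X :=
  {x : X | ∃ a ∈ A, E x a}

end CBER

/-! ### ℓ¹ machinery, amenability of CBERs -/

section Amen

variable {X : Type*} [MeasurableSpace X]

/-- ℓ¹ distance between two summable functions. -/
noncomputable def l1dist {A : Type*} (p q : A → ℝ) : ℝ :=
  ∑' a : A, |p a - q a|

/-- `p` is a probability measure concentrated on the `E`-class of `x`
(identified with its density). -/
def IsProbOnClass (E : X → X → Prop) (p : X → ℝ) (x : X) : Prop :=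
  (∀ y, 0 ≤ p y) ∧ (∀ y, p y ≠ 0 → E x y) ∧ HasSum p 1

/-- A CBER is Borel amenable if there is a sequence of Borel assignments of probability
measures on the classes which are asymptotically invariant. -/
def BorelAmenable (E : X → X → Prop) : Prop :=
  ∃ p : ℕ → X → X → ℝ,
    (∀ i x, IsProbOnClass E (p i x) x) ∧
    (∀ i, Measurable fun q : X × X => p i q.1 q.2) ∧
    (∀ x y, E x y → ∀ ε : ℝ, 0 < ε → ∀ᶠ i in atTop, l1dist (p i x) (p i y) < ε)

/-- A CBER is Borel 2-amenable if there is a double sequence of Borel assignments of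
probability measures on the classes which are asymptotically invariant in the
iterated-limit sense. -/
def Borel2Amenable (E : X → X → Prop) : Prop :=
  ∃ p : ℕ → ℕ → X → X → ℝ,
    (∀ i j x, IsProbOnClass E (p i j x) x) ∧
    (∀ i j, Measurable fun q : X × X => p i j q.1 q.2) ∧
    (∀ x y, E x y → ∀ ε : ℝ, 0 < ε →
      ∀ᶠ i in atTop, ∀ᶠ j in atTop, l1dist (p i j x) (p i j y) < ε)

/-- `E` is μ-hyperfinite: hyperfinite off a μ-null set. -/
def MuHyperfinite (E : X → X → Prop) (μ : Measure X) : Prop :=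
  ∃ A : Set X, MeasurableSet A ∧ μ Aᶜ = 0 ∧ Hyperfinite (fun a b : A => E a b)

/-- `E` is μ-amenable: Borel amenable off a μ-null set. -/
def MuAmenable (E : X → X → Prop) (μ : Measure X) : Prop :=
  ∃ A : Set X, MeasurableSet A ∧ μ Aᶜ = 0 ∧ BorelAmenable (fun a b : A => E a b)

/-- `E` is μ-2-amenable: Borel 2-amenable off a μ-null set. -/
def Mu2Amenable (E : X → X → Prop) (μ : Measure X) : Prop :=
  ∃ A : Set X, MeasurableSet A ∧ μ Aᶜ = 0 ∧ Borel2Amenable (fun a b : A => E a b)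

/-- `E` is measure-hyperfinite: μ-hyperfinite for every Borel probability measure μ. -/
def MeasureHyperfinite (E : X → X → Prop) : Prop :=
  ∀ μ : Measure X, IsProbabilityMeasure μ → MuHyperfinite E μ

end Amen

/-! ### Reiter functions and uniform coamenability -/

section Reiter

/-- A (finitely or infinitely supported) probability function on a countable set. -/
def IsProbFun {A : Type*} (p : A → ℝ) : Prop :=
  (∀ a, 0 ≤ p a) ∧ HasSum p 1

/-- The pushforward of `p : Prob(G)` under the orbit map `g ↦ g • x`. -/
noncomputable def pushMeasure {G X : Type*} [Group G] [MulAction G X]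
    (p : G → ℝ) (x : X) : X → ℝ :=
  fun y => ∑' g : {g : G // g • x = y}, p g.1

/-- `p` is an `(S, ε)`-Reiter function for the action `G ↷ X`. -/
def IsReiterFun {G : Type*} (X : Type*) [Group G] [MulAction G X]
    (S : Finset G) (ε : ℝ) (p : G → ℝ) : Prop :=
  IsProbFun p ∧ ∀ s ∈ S, ∀ x : X, l1dist (pushMeasure p x) (pushMeasure p (s • x)) < ε

/-- A subgroup `H ≤ G` is uniformly coamenable if the action `G ↷ G/H` admits
`(S, ε)`-Reiter functions for all finite `S ⊆ G` and all `ε > 0`. -/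
def UniformlyCoamenable {G : Type*} [Group G] (H : Subgroup G) : Prop :=
  ∀ (S : Finset G) (ε : ℝ), 0 < ε → ∃ p : G → ℝ, IsReiterFun (G ⧸ H) S ε p

/-- The Reiter criterion for amenability of a countable group `Q`. -/
def ReiterAmenable (Q : Type*) [Group Q] : Prop :=
  ∀ (S : Finset Q) (ε : ℝ), 0 < ε → ∃ q : Q → ℝ, IsProbFun q ∧
    ∀ s ∈ S, l1dist q (fun x => q (s⁻¹ * x)) < ε

end Reiter

/-! ### Trees, geodesics and the Gromov boundary -/

section Tree

variable {V : Type*} (T : SimpleGraph V)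

/-- The space of infinite geodesics in the graph `T`. -/
def Geo : Set (ℕ → V) :=
  {v | Function.Injective v ∧ ∀ n, T.Adj (v n) (v (n + 1))}

/-- The shift map (the action of the generator of the monoid ℕ) on `Geo T`. -/
def geoShift (v : Geo T) : Geo T :=
  ⟨fun n => v.1 (n + 1),
   fun a b h => by have := v.2.1 h; omega,
   fun n => v.2.2 (n + 1)⟩

/-- Tail equivalence: the orbit equivalence relation of the shift action of the
monoid ℕ on `Geo T`, i.e. the equivalence relation generated by `v ∼ m • v`. -/
def tailRel : Geo T → Geo T → Prop :=
  Relation.EqvGen fun a b => ∃ m : ℕ, b = (geoShift T)^[m] a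

def tailSetoid : Setoid (Geo T) :=
  ⟨tailRel T, Relation.EqvGen.is_equivalence _⟩

/-- The Gromov boundary `∂T = Geo(T)/ℕ`. -/
def Bdry : Type _ := Quotient (tailSetoid T)

instance [MeasurableSpace V] : MeasurableSpace (Bdry T) :=
  inferInstanceAs (MeasurableSpace (Quotient (tailSetoid T)))

variable {G : Type*} [Group G] [MulAction G V]

/-- The action `G ↷ V` is by graph automorphisms of `T`. -/
def IsGraphAction (G : Type*) [Group G] [MulAction G V] : Prop :=
  ∀ (g : G) (v w : V), T.Adj v w ↔ T.Adj (g • v) (g • w)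

variable {T}

/-- The coordinatewise action of `G` on `Geo T`. -/
def geoSmul (h : IsGraphAction T G) (g : G) (v : Geo T) : Geo T :=
  ⟨fun n => g • v.1 n, (MulAction.injective g).comp v.2.1,
   fun n => (h g _ _).mp (v.2.2 n)⟩

lemma geoShift_geoSmul (h : IsGraphAction T G) (g : G) (v : Geo T) :
    geoShift T (geoSmul h g v) = geoSmul h g (geoShift T v) := rfl

lemma iterate_geoShift_geoSmul (h : IsGraphAction T G) (g : G) (m : ℕ) (v : Geo T) :
    (geoShift T)^[m] (geoSmul h g v) = geoSmul h g ((geoShift T)^[m] v) := by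
  induction m generalizing v with
  | zero => rfl
  | succ m ih =>
      rw [Function.iterate_succ_apply, Function.iterate_succ_apply,
        geoShift_geoSmul, ih]

lemma tailRel_geoSmul (h : IsGraphAction T G) (g : G) {v w : Geo T}
    (hvw : tailRel T v w) : tailRel T (geoSmul h g v) (geoSmul h g w) := by
  induction hvw with
  | rel a b hab =>
      obtain ⟨m, rfl⟩ := hab
      exact Relation.EqvGen.rel _ _ ⟨m, (iterate_geoShift_geoSmul h g m a).symm⟩
  | refl a => exact Relation.EqvGen.refl _
  | symm a b _ ih => exact Relation.EqvGen.symm _ _ ih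
  | trans a b c _ _ ih1 ih2 => exact Relation.EqvGen.trans _ _ _ ih1 ih2

/-- The induced action of `G` on the Gromov boundary `∂T`. -/
def bdrySmul (h : IsGraphAction T G) (g : G) : Bdry T → Bdry T :=
  Quotient.map (geoSmul h g) (fun _ _ hab => tailRel_geoSmul h g hab)

/-- The orbit equivalence relation `E_G^{∂T}` of the boundary action. -/
def bdryRel (h : IsGraphAction T G) : Bdry T → Bdry T → Prop :=
  fun x y => ∃ g : G, bdrySmul h g x = y

/-- The orbit equivalence relation `E_G^{Geo(T)}`. -/
def geoRel (h : IsGraphAction T G) : Geo T → Geo T → Prop :=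
  fun v w => ∃ g : G, geoSmul h g v = w

end Tree

/-! ### Stabilizers of geodesics and of their initial segments -/

section Stab

variable (G : Type*) {V : Type*} [Group G] [MulAction G V]

/-- The (pointwise) stabilizer of an infinite sequence of vertices. -/
def ptwiseStab (v : ℕ → V) : Subgroup G where
  carrier := {g : G | ∀ k : ℕ, g • v k = v k}
  one_mem' := fun k => one_smul _ _
  mul_mem' := fun {a b} ha hb k => by rw [mul_smul, hb k, ha k]
  inv_mem' := fun {a} ha k => inv_smul_eq_iff.mpr (ha k).symm

/-- The stabilizer of the initial segment `(v 0, …, v n)`. -/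
def initStab (v : ℕ → V) (n : ℕ) : Subgroup G where
  carrier := {g : G | ∀ k ≤ n, g • v k = v k}
  one_mem' := fun k _ => one_smul _ _
  mul_mem' := fun {a b} ha hb k hk => by rw [mul_smul, hb k hk, ha k hk]
  inv_mem' := fun {a} ha k hk => inv_smul_eq_iff.mpr (ha k hk).symm

/-- The stabilizer of a finite geodesic given as a tuple of vertices. -/
def finStab {n : ℕ} (f : Fin n → V) : Subgroup G where
  carrier := {g : G | ∀ i : Fin n, g • f i = f i}
  one_mem' := fun i => one_smul _ _
  mul_mem' := fun {a b} ha hb i => by rw [mul_smul, hb i, ha i]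
  inv_mem' := fun {a} ha i => inv_smul_eq_iff.mpr (ha i).symm

end Stab

/-! ### Orbit equivalence relations of monoid actions -/

section MonoidOrbit

/-- The orbit equivalence relation of a monoid action: the equivalence relation
generated by `x ∼ m • x`. -/
def monOrbitRel (M : Type*) {X : Type*} [Monoid M] [MulAction M X] :
    X → X → Prop :=
  Relation.EqvGen fun x y => ∃ m : M, y = m • x

end MonoidOrbit

/-! ### STATEMENT 16 -/

section PermAction

variable {V : Type*} {G : Type*} [Group G]

/-- The Borel structure on `Geo T` for a countable vertex set `V`
(the discrete σ-algebra on `V`, the product σ-algebra on `ℕ → V`). -/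
def geoMSexp (T : SimpleGraph V) : MeasurableSpace (Geo T) :=
  MeasurableSpace.comap (fun v : Geo T => (v : ℕ → V))
    (@MeasurableSpace.pi ℕ (fun _ => V) (fun _ => ⊤))

/-- The quotient Borel structure on the Gromov boundary `∂T = Geo(T)/ℕ`. -/
def bdryMSexp (T : SimpleGraph V) : MeasurableSpace (Bdry T) :=
  (geoMSexp T).map (Quotient.mk (tailSetoid T))

/-- The coordinatewise action on `Geo T` of a group acting on `T` by graph
automorphisms via a permutation representation `φ`. -/
def permGeoSmul (T : SimpleGraph V) (φ : G →* Equiv.Perm V)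
    (h : ∀ (g : G) (v w : V), T.Adj v w ↔ T.Adj (φ g v) (φ g w))
    (g : G) (v : Geo T) : Geo T :=
  ⟨fun n => φ g (v.1 n), (Equiv.injective (φ g)).comp v.2.1,
   fun n => (h g _ _).mp (v.2.2 n)⟩

lemma geoShift_permGeoSmul (T : SimpleGraph V) (φ : G →* Equiv.Perm V)
    (h : ∀ (g : G) (v w : V), T.Adj v w ↔ T.Adj (φ g v) (φ g w))
    (g : G) (v : Geo T) :
    geoShift T (permGeoSmul T φ h g v) = permGeoSmul T φ h g (geoShift T v) := rfl

lemma iterate_geoShift_permGeoSmul (T : SimpleGraph V) (φ : G →* Equiv.Perm V)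
    (h : ∀ (g : G) (v w : V), T.Adj v w ↔ T.Adj (φ g v) (φ g w))
    (g : G) (m : ℕ) (v : Geo T) :
    (geoShift T)^[m] (permGeoSmul T φ h g v)
      = permGeoSmul T φ h g ((geoShift T)^[m] v) := by
  induction m generalizing v with
  | zero => rfl
  | succ m ih =>
      rw [Function.iterate_succ_apply, Function.iterate_succ_apply,
        geoShift_permGeoSmul, ih]

lemma tailRel_permGeoSmul (T : SimpleGraph V) (φ : G →* Equiv.Perm V)
    (h : ∀ (g : G) (v w : V), T.Adj v w ↔ T.Adj (φ g v) (φ g w))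
    (g : G) {v w : Geo T} (hvw : tailRel T v w) :
    tailRel T (permGeoSmul T φ h g v) (permGeoSmul T φ h g w) := by
  induction hvw with
  | rel a b hab =>
      obtain ⟨m, rfl⟩ := hab
      exact Relation.EqvGen.rel _ _ ⟨m, (iterate_geoShift_permGeoSmul T φ h g m a).symm⟩
  | refl a => exact Relation.EqvGen.refl _
  | symm a b _ ih => exact Relation.EqvGen.symm _ _ ih
  | trans a b c _ _ ih1 ih2 => exact Relation.EqvGen.trans _ _ _ ih1 ih2

/-- The induced boundary action. -/
def permBdrySmul (T : SimpleGraph V) (φ : G →* Equiv.Perm V)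
    (h : ∀ (g : G) (v w : V), T.Adj v w ↔ T.Adj (φ g v) (φ g w))
    (g : G) : Bdry T → Bdry T :=
  Quotient.map (permGeoSmul T φ h g) (fun _ _ hab => tailRel_permGeoSmul T φ h g hab)

end PermAction

/-!
Residual finiteness gives finite `G`-sets `G ⧸ N i` such that each `g ≠ 1` acts without fixed points
on one of them. Let `T` be the tree of finite sequences whose `i`-th entry lies in `G ⧸ N i`. Its
boundary is the product of the `G ⧸ N i`, so it carries an invariant probability measure, the
product of the uniform ones. An element of `G` that fixes an end fixes vertices of arbitrarily large
depth, hence has a fixed point in every `G ⧸ N i`, hence is trivial.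

If a free action of `G` on a probability space `X` preserves the measure and its orbit equivalence
relation is an increasing union of finite relations `F n`, then the uniform distributions on the
finite sets `{g | F n x (g⁻¹ • x)}` are maps `X → Prob(G)` that become equivariant as `n → ∞`.
Averaging them over `X` gives Reiter functions, so `G` is amenable.
-/

section ParentGraph

variable {V : Type*} {p : V → V} {d : V → ℕ}

/-- The graph of a parent function `p`: the edges join each vertex `v` to `p v`, and a fixed point
of `p` has no parent. -/
def parentGraph (p : V → V) : SimpleGraph V :=
  SimpleGraph.fromRel fun v w => p v = w

/-- `d` is a depth function for the parent function `p` of a rooted tree. The root is the only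
vertex of depth `0`, and it is its own parent. -/
structure IsDepth (p : V → V) (d : V → ℕ) : Prop where
  depth_parent (v : V) : d (p v) = d v - 1
  eq_of_depth_eq_zero {v w : V} : d v = 0 → d w = 0 → v = w

lemma parentGraph_reachable_iterate (p : V → V) (v : V) (k : ℕ) :
    (parentGraph p).Reachable v (p^[k] v) := by
  induction k with
  | zero => rfl
  | succ k ih =>
    rw [iterate_succ_apply']
    refine ih.trans ?_
    by_cases hfix : p^[k] v = p (p^[k] v)
    · rw [← hfix]
    · exact SimpleGraph.Adj.reachable ⟨hfix, Or.inl rfl⟩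

lemma exists_iterate_eq_of_walk_deleteEdges {v a b : V}
    (w : ((parentGraph p).deleteEdges {s(v, p v)}).Walk a b) (ha : ∃ k, p^[k] a = v) :
    ∃ k, p^[k] b = v := by
  induction w with
  | nil => exact ha
  | @cons a b _ hab _ ih =>
    refine ih ?_
    obtain ⟨k, hk⟩ := ha
    obtain ⟨⟨-, rfl | rfl⟩, hdel⟩ := SimpleGraph.deleteEdges_adj.1 hab
    · cases k with
      | zero =>
        obtain rfl : a = v := hk
        exact absurd rfl hdel
      | succ k => exact ⟨k, hk⟩
    · exact ⟨k + 1, hk⟩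

namespace IsDepth

lemma depth_iterate (h : IsDepth p d) (v : V) (k : ℕ) : d (p^[k] v) = d v - k := by
  induction k with
  | zero => rfl
  | succ k ih => rw [iterate_succ_apply', h.depth_parent, ih, Nat.sub_sub]

lemma depth_eq_of_ne (h : IsDepth p d) {v : V} (hv : v ≠ p v) : d v = d (p v) + 1 := by
  have hpos : d v ≠ 0 := fun h0 => hv (h.eq_of_depth_eq_zero h0 (by rw [h.depth_parent, h0]))
  rw [h.depth_parent]
  lia

lemma eq_parent_or_eq_parent (h : IsDepth p d) {v w : V} (hvw : (parentGraph p).Adj v w) :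
    p v = w ∧ d v = d w + 1 ∨ p w = v ∧ d w = d v + 1 := by
  obtain ⟨hne, rfl | rfl⟩ := hvw
  · exact Or.inl ⟨rfl, h.depth_eq_of_ne hne⟩
  · exact Or.inr ⟨rfl, h.depth_eq_of_ne hne.symm⟩

lemma isBridge_parent (h : IsDepth p d) {v : V} (hv : v ≠ p v) :
    (parentGraph p).IsBridge s(v, p v) := by
  rw [SimpleGraph.isBridge_iff]
  rintro ⟨w⟩
  obtain ⟨k, hk⟩ := exists_iterate_eq_of_walk_deleteEdges w ⟨0, rfl⟩
  have hdepth := h.depth_iterate (p v) k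
  rw [hk] at hdepth
  have := h.depth_eq_of_ne hv
  lia

lemma isTree_parentGraph [Nonempty V] (h : IsDepth p d) : (parentGraph p).IsTree := by
  refine ⟨⟨fun v w => ?_⟩, SimpleGraph.isAcyclic_iff_forall_adj_isBridge.2 ?_⟩
  · have hroot : p^[d v] v = p^[d w] w :=
      h.eq_of_depth_eq_zero (by simp [h.depth_iterate]) (by simp [h.depth_iterate])
    have hv := parentGraph_reachable_iterate p v (d v)
    rw [hroot] at hv
    exact hv.trans (parentGraph_reachable_iterate p w (d w)).symm
  · rintro v w ⟨hne, rfl | rfl⟩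
    · exact h.isBridge_parent hne
    · rw [Sym2.eq_swap]
      exact h.isBridge_parent hne.symm

lemma exists_geo_depth_add (h : IsDepth p d) (v : Geo (parentGraph p)) :
    ∃ k, ∀ j, d (v.1 (k + j)) = d (v.1 k) + j := by
  have keeps_descending : ∀ k, d (v.1 (k + 1)) = d (v.1 k) + 1 →
      d (v.1 (k + 2)) = d (v.1 (k + 1)) + 1 := by
    intro k hk
    rcases h.eq_parent_or_eq_parent (v.2.2 k) with hup | ⟨hparent, -⟩
    · lia
    rcases h.eq_parent_or_eq_parent (v.2.2 (k + 1)) with ⟨hback, -⟩ | hdown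
    · exact absurd (v.2.1 (hparent.symm.trans hback)) (by lia)
    · exact hdown.2
  have starts_descending : ∃ k, d (v.1 (k + 1)) = d (v.1 k) + 1 := by
    by_contra! hascend
    have hdepth : ∀ k, d (v.1 k) + k = d (v.1 0) := by
      intro k
      induction k with
      | zero => rfl
      | succ k ih =>
        rcases h.eq_parent_or_eq_parent (v.2.2 k) with hup | hdown
        · lia
        · exact absurd hdown.2 (hascend k)
    have := hdepth (d (v.1 0) + 1)
    lia
  obtain ⟨k, hk⟩ := starts_descending
  have descends : ∀ j, d (v.1 (k + j + 1)) = d (v.1 (k + j)) + 1 := fun j => by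
    induction j with
    | zero => exact hk
    | succ j ih => exact keeps_descending _ ih
  refine ⟨k, fun j => ?_⟩
  induction j with
  | zero => rfl
  | succ j ih => rw [← add_assoc, descends j, ih, add_assoc]

end IsDepth

end ParentGraph

section Boundary

variable {V : Type*}

lemma geoShift_iterate_apply {T : SimpleGraph V} (m : ℕ) (v : Geo T) (k : ℕ) :
    ((geoShift T)^[m] v).1 k = v.1 (m + k) := by
  induction m generalizing v with
  | zero => rw [zero_add, iterate_zero_apply]
  | succ m ih =>
    rw [iterate_succ_apply, ih, Nat.add_right_comm]
    rfl

lemma tailRel_iff {T : SimpleGraph V} {v w : Geo T} :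
    tailRel T v w ↔ ∃ m n, (geoShift T)^[m] v = (geoShift T)^[n] w := by
  constructor
  · intro h
    induction h with
    | rel a b hab => exact hab.imp fun m hm => ⟨0, hm.symm⟩
    | refl a => exact ⟨0, 0, rfl⟩
    | symm a b _ ih =>
      obtain ⟨m, n, h⟩ := ih
      exact ⟨n, m, h.symm⟩
    | trans a b c _ _ ihab ihbc =>
      obtain ⟨m, n, hab⟩ := ihab
      obtain ⟨k, l, hbc⟩ := ihbc
      refine ⟨k + m, n + l, ?_⟩
      rw [iterate_add_apply, hab, ← iterate_add_apply, Nat.add_comm k n, iterate_add_apply, hbc,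
        ← iterate_add_apply]
  · rintro ⟨m, n, h⟩
    exact .trans _ _ _ (.rel _ _ ⟨m, rfl⟩) (h ▸ .symm _ _ (.rel _ _ ⟨n, rfl⟩))

variable {G : Type*} [Group G]

/- A fixed end gives a geodesic `v` with `φ g (v (m + k)) = v (n + k)` for all `k`. Comparing depths
far out along `v` forces `m = n`. -/
lemma IsDepth.exists_fixed_of_permBdrySmul_eq {p : V → V} {d : V → ℕ} (h : IsDepth p d)
    {φ : G →* Equiv.Perm V}
    {hact : ∀ (g : G) (v w : V), (parentGraph p).Adj v w ↔ (parentGraph p).Adj (φ g v) (φ g w)}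
    {g : G} (hg : ∀ v, d (φ g v) = d v) {x : Bdry (parentGraph p)}
    (hx : permBdrySmul (parentGraph p) φ hact g x = x) (N : ℕ) :
    ∃ v, N ≤ d v ∧ φ g v = v := by
  induction x using Quotient.inductionOn with | h v => ?_
  obtain ⟨m, n, hmn⟩ := tailRel_iff.1 (Quotient.exact hx)
  have hshift : ∀ k, φ g (v.1 (m + k)) = v.1 (n + k) := fun k => by
    have := congrArg (fun u : Geo (parentGraph p) => u.1 k) hmn
    simp only [geoShift_iterate_apply] at this
    exact this
  obtain ⟨k, hk⟩ := h.exists_geo_depth_add v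
  have hdepth := hg (v.1 (m + (k + N)))
  rw [hshift, Nat.add_left_comm n, Nat.add_left_comm m, hk, hk] at hdepth
  obtain rfl : n = m := by lia
  refine ⟨v.1 (n + (k + N)), ?_, hshift _⟩
  rw [Nat.add_left_comm, hk]
  lia

variable (T : SimpleGraph V)

lemma measurable_toGeo {X : Type*} [MeasurableSpace X] {f : X → Geo T}
    (hf : ∀ n, Measurable[_, ⊤] fun x => (f x).1 n) : Measurable[_, geoMSexp T] f := by
  let : MeasurableSpace V := ⊤
  exact measurable_comap_iff.2 (measurable_pi_iff.2 hf)

lemma measurable_geo_apply (n : ℕ) : Measurable[geoMSexp T, ⊤] fun v : Geo T => v.1 n := by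
  let : MeasurableSpace V := ⊤
  exact (measurable_pi_apply n).comp (comap_measurable _)

variable (φ : G →* Equiv.Perm V)
  (hact : ∀ (g : G) (v w : V), T.Adj v w ↔ T.Adj (φ g v) (φ g w))

lemma measurable_permBdrySmul (g : G) :
    Measurable[bdryMSexp T, bdryMSexp T] (permBdrySmul T φ hact g) := by
  let : MeasurableSpace V := ⊤
  let : MeasurableSpace (Geo T) := geoMSexp T
  have hgeo : Measurable (permGeoSmul T φ hact g) :=
    measurable_toGeo T fun n => measurable_from_top.comp (measurable_geo_apply T n)
  exact fun _ hs => hgeo hs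

/-- The boundary action as a `MulAction`. It is not an instance, as it depends on `φ`. -/
@[reducible]
def permBdryMulAction : MulAction G (Bdry T) where
  smul := permBdrySmul T φ hact
  one_smul x := by
    induction x using Quotient.inductionOn with | h v => ?_
    exact congrArg (Quotient.mk _) (Subtype.ext (by simp [permGeoSmul]))
  mul_smul g g' x := by
    induction x using Quotient.inductionOn with | h v => ?_
    exact congrArg (Quotient.mk _) (Subtype.ext (by simp [permGeoSmul]))

end Boundary

section ProbFun

variable {A : Type*}

lemma l1dist_self (p : A → ℝ) : l1dist p p = 0 := by
  simp [l1dist]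

lemma l1dist_nonneg (p q : A → ℝ) : 0 ≤ l1dist p q :=
  tsum_nonneg fun _ => abs_nonneg _

lemma abs_sub_le_add_of_nonneg {a b : ℝ} (ha : 0 ≤ a) (hb : 0 ≤ b) : |a - b| ≤ a + b :=
  (abs_sub a b).trans_eq (by rw [abs_of_nonneg ha, abs_of_nonneg hb])

namespace IsProbFun

variable {p q : A → ℝ}

lemma le_one (hp : IsProbFun p) (a : A) : p a ≤ 1 :=
  le_hasSum hp.2 a fun b _ => hp.1 b

lemma summable_abs_sub (hp : IsProbFun p) (hq : IsProbFun q) : Summable fun a => |p a - q a| :=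
  .of_nonneg_of_le (fun _ => abs_nonneg _)
    (fun a => abs_sub_le_add_of_nonneg (hp.1 a) (hq.1 a)) (hp.2.add hq.2).summable

lemma l1dist_le_two (hp : IsProbFun p) (hq : IsProbFun q) : l1dist p q ≤ 2 :=
  calc l1dist p q ≤ ∑' a, (p a + q a) :=
        (hp.summable_abs_sub hq).tsum_le_tsum
          (fun a => abs_sub_le_add_of_nonneg (hp.1 a) (hq.1 a)) (hp.2.add hq.2).summable
    _ = 1 + 1 := (hp.2.add hq.2).tsum_eq
    _ = 2 := one_add_one_eq_two

lemma comp_equiv (hp : IsProbFun p) {B : Type*} (e : B ≃ A) : IsProbFun (p ∘ e) :=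
  ⟨fun b => hp.1 (e b), e.hasSum_iff.2 hp.2⟩

end IsProbFun

section Average

variable {X : Type*} [MeasurableSpace X] {μ : Measure X} {p q : X → A → ℝ}

lemma measurable_l1dist [Countable A] (hpm : ∀ a, Measurable fun x => p x a)
    (hqm : ∀ a, Measurable fun x => q x a) : Measurable fun x => l1dist (p x) (q x) :=
  Measurable.tsum fun a => (hpm a).sub (hqm a) |>.abs

lemma norm_l1dist_le_two_ae (hp : ∀ᵐ x ∂μ, IsProbFun (p x)) (hq : ∀ᵐ x ∂μ, IsProbFun (q x)) :
    ∀ᵐ x ∂μ, ‖l1dist (p x) (q x)‖ ≤ 2 := by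
  filter_upwards [hp, hq] with x hpx hqx
  rw [Real.norm_of_nonneg (l1dist_nonneg _ _)]
  exact hpx.l1dist_le_two hqx

variable [IsProbabilityMeasure μ]

lemma integrable_of_ae_isProbFun (hpm : ∀ a, Measurable fun x => p x a)
    (hp : ∀ᵐ x ∂μ, IsProbFun (p x)) (a : A) : Integrable (fun x => p x a) μ := by
  refine .of_bound (hpm a).aestronglyMeasurable 1 ?_
  filter_upwards [hp] with x hx
  rw [Real.norm_of_nonneg (hx.1 a)]
  exact hx.le_one a

variable [Countable A]

lemma isProbFun_integral (hpm : ∀ a, Measurable fun x => p x a)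
    (hp : ∀ᵐ x ∂μ, IsProbFun (p x)) : IsProbFun fun a => ∫ x, p x a ∂μ := by
  refine ⟨fun a => integral_nonneg_of_ae (hp.mono fun x hx => hx.1 a), ?_⟩
  have hsum := hasSum_integral_of_dominated_convergence (μ := μ) (fun a x => p x a)
    (fun a => (hpm a).aestronglyMeasurable)
    (fun a => hp.mono fun x hx => (Real.norm_of_nonneg (hx.1 a)).le)
    (hp.mono fun x hx => hx.2.summable)
    ((integrable_const 1).congr (hp.mono fun x hx => hx.2.tsum_eq.symm))
    (hp.mono fun x hx => hx.2)
  rwa [integral_const, probReal_univ, one_smul] at hsum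

lemma l1dist_integral_le (hpm : ∀ a, Measurable fun x => p x a)
    (hqm : ∀ a, Measurable fun x => q x a) (hp : ∀ᵐ x ∂μ, IsProbFun (p x))
    (hq : ∀ᵐ x ∂μ, IsProbFun (q x)) :
    l1dist (fun a => ∫ x, p x a ∂μ) (fun a => ∫ x, q x a ∂μ) ≤ ∫ x, l1dist (p x) (q x) ∂μ := by
  have hsum : HasSum (fun a => ∫ x, |p x a - q x a| ∂μ) (∫ x, l1dist (p x) (q x) ∂μ) := by
    have hsummable : ∀ᵐ x ∂μ, Summable fun a => |p x a - q x a| := by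
      filter_upwards [hp, hq] with x hpx hqx using hpx.summable_abs_sub hqx
    exact hasSum_integral_of_dominated_convergence (fun a x => |p x a - q x a|)
      (fun a => ((hpm a).sub (hqm a)).abs.aestronglyMeasurable)
      (fun a => .of_forall fun x => (Real.norm_of_nonneg (abs_nonneg _)).le) hsummable
      (.of_bound (measurable_l1dist hpm hqm).aestronglyMeasurable 2 (norm_l1dist_le_two_ae hp hq))
      (hsummable.mono fun x hx => hx.hasSum)
  rw [← hsum.tsum_eq]
  refine ((isProbFun_integral hpm hp).summable_abs_sub (isProbFun_integral hqm hq)).tsum_le_tsum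
    (fun a => ?_) hsum.summable
  rw [← integral_sub (integrable_of_ae_isProbFun hpm hp a) (integrable_of_ae_isProbFun hqm hq a)]
  exact abs_integral_le_integral_abs

end Average

/- The averages `g ↦ ∫ x, p n x g ∂μ` are Reiter functions: by invariance of `μ` they are also the
averages of `p n (s • x)`, which is close to the translate of `p n x` by `s`. -/
lemma reiterAmenable_of_tendsto_l1dist {G X : Type*} [Group G] [Countable G] [MeasurableSpace X]
    [MulAction G X] [MeasurableConstSMul G X] {μ : Measure X} [SMulInvariantMeasure G X μ]
    [IsProbabilityMeasure μ] {p : ℕ → X → G → ℝ} (hpm : ∀ n g, Measurable fun x => p n x g)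
    (hp : ∀ n, ∀ᵐ x ∂μ, IsProbFun (p n x))
    (hlim : ∀ s : G, ∀ᵐ x ∂μ,
      Tendsto (fun n => l1dist (p n (s • x)) fun g => p n x (s⁻¹ * g)) atTop (nhds 0)) :
    ReiterAmenable G := by
  intro S ε hε
  have hpm' : ∀ (s : G) n g, Measurable fun x => p n (s • x) g := fun s n g =>
    (hpm n g).comp (measurable_const_smul s)
  have hp' : ∀ (s : G) n, ∀ᵐ x ∂μ, IsProbFun (p n (s • x)) := fun s n =>
    (measurePreserving_smul s μ).quasiMeasurePreserving.ae (hp n)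
  have hpt : ∀ (s : G) n, ∀ᵐ x ∂μ, IsProbFun fun g => p n x (s⁻¹ * g) := fun s n =>
    (hp n).mono fun x hx => hx.comp_equiv (Equiv.mulLeft s⁻¹)
  have hintegral : ∀ s : G, Tendsto
      (fun n => ∫ x, l1dist (p n (s • x)) (fun g => p n x (s⁻¹ * g)) ∂μ) atTop (nhds 0) := by
    intro s
    have := tendsto_integral_of_dominated_convergence (μ := μ) (fun _ => 2)
      (fun n => (measurable_l1dist (hpm' s n)
        fun g => hpm n (s⁻¹ * g)).aestronglyMeasurable) (integrable_const _)
      (fun n => norm_l1dist_le_two_ae (hp' s n) (hpt s n)) (hlim s)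
    rwa [integral_zero] at this
  have hsmall : ∀ᶠ n in atTop, ∀ s ∈ S,
      ∫ x, l1dist (p n (s • x)) (fun g => p n x (s⁻¹ * g)) ∂μ < ε :=
    (eventually_all_finset S).2 fun s _ => (hintegral s).eventually_lt_const hε
  obtain ⟨n, hn⟩ := hsmall.exists
  refine ⟨fun g => ∫ x, p n x g ∂μ, isProbFun_integral (hpm n) (hp n), fun s hs => ?_⟩
  have hinv : (fun g => ∫ x, p n x g ∂μ) = fun g => ∫ x, p n (s • x) g ∂μ :=
    funext fun g => (integral_smul_eq_self (fun x => p n x g)).symm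
  calc l1dist (fun g => ∫ x, p n x g ∂μ) (fun g => ∫ x, p n x (s⁻¹ * g) ∂μ)
      = l1dist (fun g => ∫ x, p n (s • x) g ∂μ) (fun g => ∫ x, p n x (s⁻¹ * g) ∂μ) := by rw [← hinv]
    _ ≤ ∫ x, l1dist (p n (s • x)) (fun g => p n x (s⁻¹ * g)) ∂μ :=
        l1dist_integral_le (hpm' s n) (fun g => hpm n (s⁻¹ * g)) (hp' s n) (hpt s n)
    _ < ε := hn s hs

/-- The density of the uniform probability measure on a finite nonempty set `C`. It is
identically `0` when `C` is infinite or empty. -/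
noncomputable def uniformProb (C : Set A) (a : A) : ℝ :=
  C.indicator 1 a / C.ncard

lemma isProbFun_uniformProb {C : Set A} (hfin : C.Finite) (hne : C.Nonempty) :
    IsProbFun (uniformProb C) := by
  refine ⟨fun a => div_nonneg (Set.indicator_nonneg (fun _ _ => zero_le_one) a)
    (Nat.cast_nonneg _), ?_⟩
  have hsum : HasSum (C.indicator (1 : A → ℝ)) C.ncard := by
    have := hasSum_subtype_iff_indicator.1 (hfin.toFinset.hasSum (1 : A → ℝ))
    simpa [← Set.ncard_eq_toFinset_card C hfin] using this
  have hcard : (C.ncard : ℝ) ≠ 0 := Nat.cast_ne_zero.2 (Set.ncard_ne_zero_of_mem hne.some_mem hfin)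
  have := hsum.div_const (C.ncard : ℝ)
  rwa [div_self hcard] at this

lemma measurable_uniformProb {X : Type*} [MeasurableSpace X] [Countable A] {C : X → Set A}
    (hC : ∀ a, MeasurableSet {x | a ∈ C x}) (a : A) :
    Measurable fun x => uniformProb (C x) a := by
  have hencard : Measurable fun x => ∑' a, (C x).indicator (1 : A → ENNReal) a :=
    .tsum fun a => (measurable_const (a := (1 : ENNReal))).indicator (hC a)
  have hncard (x : X) : ((C x).ncard : ℝ) = (∑' a, (C x).indicator (1 : A → ENNReal) a).toReal := by
    rw [← tsum_subtype]
    simp only [Pi.one_apply, ENNReal.tsum_set_one, Set.ncard]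
    cases (C x).encard <;> simp
  have hind : Measurable fun x => (C x).indicator (1 : A → ℝ) a :=
    measurable_const.indicator (hC a)
  simp only [uniformProb, hncard]
  exact hind.div hencard.ennreal_toReal

open scoped Pointwise in
lemma uniformProb_smul {G : Type*} [Group G] [MulAction G A] (g : G) (C : Set A) (a : A) :
    uniformProb (g • C) a = uniformProb C (g⁻¹ • a) := by
  classical
  simp only [uniformProb, Set.ncard_smul_set, Set.indicator_apply,
    Set.mem_smul_set_iff_inv_smul_mem, Pi.one_apply]

end ProbFun

section Hyperfinite

variable {X : Type*}

/-- The group elements that carry a point of the `R`-class of `x` to `x`. For a relation `R`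
contained in the orbit equivalence relation of a free action this is a copy of the class of `x`
inside `G`. The inverse makes the set move by left translation along `R`: see `returnSet_smul`. -/
def returnSet (G : Type*) [Group G] [MulAction G X] (R : X → X → Prop) (x : X) : Set G :=
  {g | R x (g⁻¹ • x)}

variable [MeasurableSpace X]

/-- A partial equivalence relation with Borel graph and finite classes, i.e. a finite Borel
equivalence relation on a subset of `X`. It avoids subtypes when a relation lives on a conull
set. -/
structure IsFiniteBorelPER (R : X → X → Prop) : Prop where
  symm {x y : X} : R x y → R y x
  trans {x y z : X} : R x y → R y z → R x z
  measurableSet : MeasurableSet {z : X × X | R z.1 z.2}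
  finite (x : X) : {y | R x y}.Finite

lemma IsFiniteBorelEquivalence.isFiniteBorelPER_map {A : Set X} (hA : MeasurableSet A)
    {F : A → A → Prop} (hF : IsFiniteBorelEquivalence F) :
    IsFiniteBorelPER (Relation.Map F Subtype.val Subtype.val) where
  symm := by
    rintro _ _ ⟨a, b, hab, rfl, rfl⟩
    exact ⟨b, a, hF.1.symm hab, rfl, rfl⟩
  trans := by
    rintro _ _ _ ⟨a, b, hab, rfl, rfl⟩ ⟨b', c, hbc, hb, rfl⟩
    obtain rfl := Subtype.ext hb
    exact ⟨a, c, hF.1.trans hab hbc, rfl, rfl⟩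
  measurableSet := by
    have hval := MeasurableEmbedding.subtype_coe hA
    convert (hval.prodMap hval).measurableSet_image' hF.2.1 using 1
    ext ⟨x, y⟩
    simp [Relation.Map]
  finite x := by
    by_cases hx : x ∈ A
    · refine ((hF.2.2 ⟨x, hx⟩).image Subtype.val).subset ?_
      rintro _ ⟨a, b, hab, rfl, rfl⟩
      exact ⟨b, hab, rfl⟩
    · refine Set.finite_empty.subset ?_
      rintro _ ⟨a, _, _, rfl, _⟩
      exact hx a.2

variable {G : Type*} [Group G] [MulAction G X]

namespace IsFiniteBorelPER

variable {R : X → X → Prop}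

open scoped Pointwise in
lemma returnSet_smul (hR : IsFiniteBorelPER R) {s : G} {x : X} (hs : R x (s • x)) :
    returnSet G R (s • x) = s • returnSet G R x := by
  ext g
  have horbit : (s⁻¹ * g)⁻¹ • x = g⁻¹ • s • x := by rw [mul_inv_rev, inv_inv, mul_smul]
  rw [Set.mem_smul_set_iff_inv_smul_mem, smul_eq_mul]
  change R (s • x) (g⁻¹ • s • x) ↔ R x ((s⁻¹ * g)⁻¹ • x)
  rw [horbit]
  exact ⟨hR.trans hs, hR.trans (hR.symm hs)⟩

lemma finite_returnSet (hR : IsFiniteBorelPER R) {x : X} (hx : ∀ g : G, g • x = x → g = 1) :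
    (returnSet G R x).Finite := by
  have hinj : Injective fun g : G => g⁻¹ • x := fun g g' h => by
    have hgg' : g⁻¹ • x = g'⁻¹ • x := h
    exact mul_inv_eq_one.1 (hx (g * g'⁻¹) (by rw [mul_smul, ← hgg', smul_inv_smul]))
  exact (hR.finite x).preimage hinj.injOn

lemma measurableSet_mem_returnSet [MeasurableConstSMul G X] (hR : IsFiniteBorelPER R) (g : G) :
    MeasurableSet {x | g ∈ returnSet G R x} :=
  measurableSet_preimage (measurable_id.prodMk (measurable_const_smul g⁻¹)) hR.measurableSet

end IsFiniteBorelPER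

lemma reiterAmenable_of_muHyperfinite [Countable G] [MeasurableConstSMul G X] {μ : Measure X}
    [SMulInvariantMeasure G X μ] [IsProbabilityMeasure μ]
    (hfree : ∀ᵐ x ∂μ, ∀ g : G, g • x = x → g = 1)
    (hE : MuHyperfinite (fun x y => ∃ g : G, g • x = y) μ) : ReiterAmenable G := by
  obtain ⟨A, hA, hAμ, F, hF, hmono, hEF⟩ := hE
  let R (n : ℕ) : X → X → Prop := Relation.Map (F n) Subtype.val Subtype.val
  have hR (n : ℕ) : IsFiniteBorelPER (R n) := (hF n).isFiniteBorelPER_map hA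
  have horbit : ∀ᵐ x ∂μ, ∀ g : G, g • x ∈ A := ae_all_iff.2 fun g =>
    (measurePreserving_smul g μ).quasiMeasurePreserving.ae (p := (· ∈ A)) hAμ
  refine reiterAmenable_of_tendsto_l1dist (μ := μ)
    (p := fun n x => uniformProb (returnSet G (R n) x))
    (fun n => measurable_uniformProb (hR n).measurableSet_mem_returnSet) (fun n => ?_) fun s => ?_
  · filter_upwards [hfree, horbit] with x hx hxA
    have hxA1 : x ∈ A := one_smul G x ▸ hxA 1
    refine isProbFun_uniformProb ((hR n).finite_returnSet hx) ⟨1, ⟨x, hxA1⟩, ⟨x, hxA1⟩, ?_, rfl, ?_⟩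
    · exact (hF n).1.refl _
    · rw [inv_one, one_smul]
  · filter_upwards [horbit] with x hxA
    have hxA1 : x ∈ A := one_smul G x ▸ hxA 1
    obtain ⟨n₀, hn₀⟩ := (hEF ⟨x, hxA1⟩ ⟨s • x, hxA s⟩).1 ⟨s, rfl⟩
    refine tendsto_const_nhds.congr' ?_
    filter_upwards [eventually_ge_atTop n₀] with n hn
    have hsx : R n x (s • x) :=
      ⟨_, _, Nat.le_induction hn₀ (fun k _ => hmono k _ _) n hn, rfl, rfl⟩
    have htranslate : uniformProb (returnSet G (R n) (s • x)) =
        fun g => uniformProb (returnSet G (R n) x) (s⁻¹ * g) := funext fun g => by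
      rw [(hR n).returnSet_smul hsx, uniformProb_smul, smul_eq_mul]
    rw [htranslate, l1dist_self]

end Hyperfinite

section ProductMeasure

variable {G : Type*} [Group G]

lemma smulInvariantMeasure_infinitePi {ι : Type*} {α : ι → Type*} [∀ i, MeasurableSpace (α i)]
    [∀ i, MulAction G (α i)] [∀ i, MeasurableConstSMul G (α i)] (μ : ∀ i, Measure (α i))
    [∀ i, IsProbabilityMeasure (μ i)] [∀ i, SMulInvariantMeasure G (α i) (μ i)] :
    SMulInvariantMeasure G (∀ i, α i) (Measure.infinitePi μ) := by
  refine ((smulInvariantMeasure_tfae G (Measure.infinitePi μ)).out 0 5).2 fun g => ?_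
  have hmap := Measure.infinitePi_map_pi μ fun i => measurable_const_smul (α := α i) g
  simp only [MeasureTheory.map_smul] at hmap
  exact hmap

lemma smulInvariantMeasure_uniformOn_univ {Ω : Type*} [Finite Ω] [MeasurableSpace Ω]
    [MeasurableSingletonClass Ω] [MulAction G Ω] [MeasurableConstSMul G Ω] :
    SMulInvariantMeasure G Ω (ProbabilityTheory.uniformOn Set.univ) where
  measure_preimage_smul g s hs := by
    have := Fintype.ofFinite Ω
    rw [ProbabilityTheory.uniformOn_univ, ProbabilityTheory.uniformOn_univ,
      Measure.count_apply hs, Measure.count_apply (measurable_const_smul g hs),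
      Set.encard_preimage_of_bijective (MulAction.bijective g)]

end ProductMeasure

section SeqTree

/-- Finite sequences with `i`-th entry in `α i`, the vertices of `seqTree α`. -/
def SeqVertex (α : ℕ → Type*) : Type _ :=
  Σ n : ℕ, (i : Fin n) → α i

variable {α : ℕ → Type*} {G : Type*} [Group G] [∀ i, MulAction G (α i)]

namespace SeqVertex

instance [∀ i, Countable (α i)] : Countable (SeqVertex α) :=
  inferInstanceAs (Countable (Σ n : ℕ, (i : Fin n) → α i))

instance : MulAction G (SeqVertex α) :=
  inferInstanceAs (MulAction G (Σ n : ℕ, (i : Fin n) → α i))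

/-- The empty sequence. -/
def root (α : ℕ → Type*) : SeqVertex α :=
  ⟨0, fun i => i.elim0⟩

instance : Nonempty (SeqVertex α) :=
  ⟨root α⟩

/-- The number of entries of a sequence. -/
def length (v : SeqVertex α) : ℕ :=
  v.1

/-- Dropping the last entry of a sequence. The empty sequence is its own parent. -/
def parent (v : SeqVertex α) : SeqVertex α :=
  ⟨v.1 - 1, fun i => v.2 (i.castLE (Nat.sub_le _ _))⟩

lemma eq_root_of_length_eq_zero {v : SeqVertex α} (hv : v.length = 0) : v = root α := by
  obtain ⟨n, x⟩ := v
  obtain rfl : n = 0 := hv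
  exact congrArg (Sigma.mk 0) (funext fun i => i.elim0)

lemma isDepth_length : IsDepth (parent (α := α)) length where
  depth_parent _ := rfl
  eq_of_depth_eq_zero hv hw :=
    (eq_root_of_length_eq_zero hv).trans (eq_root_of_length_eq_zero hw).symm

lemma length_smul (g : G) (v : SeqVertex α) : (g • v).length = v.length :=
  rfl

lemma smul_root (g : G) : g • root α = root α :=
  eq_root_of_length_eq_zero (length_smul g _)

lemma parent_smul (g : G) (v : SeqVertex α) : (g • v).parent = g • v.parent :=
  rfl

lemma exists_smul_eq_of_smul_eq {g : G} {v : SeqVertex α} (hv : g • v = v) {i : ℕ}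
    (hi : i < v.length) : ∃ a : α i, g • a = a := by
  obtain ⟨n, x⟩ := v
  have hx : g • x = x := eq_of_heq (Sigma.mk.inj hv).2
  exact ⟨x ⟨i, hi⟩, congrFun hx ⟨i, hi⟩⟩

end SeqVertex

/-- The tree of finite sequences ordered by extension. Its boundary is the product of the `α i`. -/
def seqTree (α : ℕ → Type*) : SimpleGraph (SeqVertex α) :=
  parentGraph SeqVertex.parent

lemma isTree_seqTree : (seqTree α).IsTree :=
  SeqVertex.isDepth_length.isTree_parentGraph

lemma seqTree_adj_iff_toPermHom (g : G) (v w : SeqVertex α) :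
    (seqTree α).Adj v w ↔ (seqTree α).Adj (MulAction.toPermHom G _ g v)
      (MulAction.toPermHom G _ g w) := by
  simp only [seqTree, parentGraph, SimpleGraph.fromRel_adj, MulAction.toPermHom_apply,
    MulAction.toPerm_apply, SeqVertex.parent_smul, ne_eq, smul_left_cancel_iff]

instance : MulAction G (Bdry (seqTree α)) :=
  permBdryMulAction (seqTree α) (MulAction.toPermHom G _) seqTree_adj_iff_toPermHom

instance : MeasurableSpace (Bdry (seqTree α)) :=
  bdryMSexp (seqTree α)

instance : MeasurableConstSMul G (Bdry (seqTree α)) :=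
  ⟨measurable_permBdrySmul (seqTree α) _ seqTree_adj_iff_toPermHom⟩

lemma smul_bdry_seqTree_ne {g : G} (hg : ∃ i, ∀ a : α i, g • a ≠ a) (x : Bdry (seqTree α)) :
    g • x ≠ x := by
  obtain ⟨i, hi⟩ := hg
  intro hx
  obtain ⟨v, hlength, hv⟩ := SeqVertex.isDepth_length.exists_fixed_of_permBdrySmul_eq
    (SeqVertex.length_smul g) hx (i + 1)
  obtain ⟨a, ha⟩ := SeqVertex.exists_smul_eq_of_smul_eq hv hlength
  exact hi a ha

/-- The geodesic from the root through the initial segments of an infinite sequence. -/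
def seqGeo (x : ∀ i, α i) : Geo (seqTree α) :=
  ⟨fun n => ⟨n, fun i => x i⟩, fun _ _ h => congrArg Sigma.fst h,
    fun n => ⟨fun h => n.lt_succ_self.ne (congrArg Sigma.fst h), Or.inr rfl⟩⟩

/-- The end of `seqTree α` determined by an infinite sequence. -/
def seqEnd (x : ∀ i, α i) : Bdry (seqTree α) :=
  Quotient.mk _ (seqGeo x)

lemma seqEnd_smul (g : G) (x : ∀ i, α i) : seqEnd (g • x) = g • seqEnd x :=
  rfl

lemma measurable_seqEnd [∀ i, Countable (α i)] [∀ i, MeasurableSpace (α i)]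
    [∀ i, MeasurableSingletonClass (α i)] : Measurable (seqEnd (α := α)) := by
  let : MeasurableSpace (SeqVertex α) := ⊤
  let : MeasurableSpace (Geo (seqTree α)) := geoMSexp (seqTree α)
  have hmk (n : ℕ) : Measurable (β := SeqVertex α) fun y : (i : Fin n) → α i => ⟨n, y⟩ :=
    measurable_of_countable _
  have hgeo : Measurable (seqGeo (α := α)) := measurable_toGeo _ fun n =>
    (hmk n).comp (measurable_pi_lambda _ fun i => measurable_pi_apply _)
  exact fun _ hs => hgeo hs

lemma exists_invariant_isProbabilityMeasure_bdry_seqTree [∀ i, Finite (α i)]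
    [∀ i, Nonempty (α i)] :
    ∃ μ : Measure (Bdry (seqTree α)), IsProbabilityMeasure μ ∧ SMulInvariantMeasure G _ μ := by
  let (i : ℕ) : MeasurableSpace (α i) := ⊤
  have (i : ℕ) : DiscreteMeasurableSpace (α i) := ⟨fun _ => trivial⟩
  have (i : ℕ) : MeasurableConstSMul G (α i) := ⟨fun _ => .of_discrete⟩
  let μ (i : ℕ) : Measure (α i) := ProbabilityTheory.uniformOn Set.univ
  have (i : ℕ) : IsProbabilityMeasure (μ i) :=
    ProbabilityTheory.isProbabilityMeasure_uniformOn Set.finite_univ Set.univ_nonempty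
  have (i : ℕ) : SMulInvariantMeasure G (α i) (μ i) := smulInvariantMeasure_uniformOn_univ
  have : SMulInvariantMeasure G (∀ i, α i) (Measure.infinitePi μ) :=
    smulInvariantMeasure_infinitePi μ
  exact ⟨(Measure.infinitePi μ).map seqEnd,
    Measure.isProbabilityMeasure_map measurable_seqEnd.aemeasurable,
    smulInvariantMeasure_map _ _ seqEnd_smul measurable_seqEnd⟩

end SeqTree

lemma exists_nat_subgroup_separating {G : Type*} [Group G] [Countable G]
    (hrf : ∀ g : G, g ≠ 1 → ∃ N : Subgroup G, N.Normal ∧ N.FiniteIndex ∧ g ∉ N) :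
    ∃ N : ℕ → Subgroup G, (∀ i, (N i).Normal) ∧ (∀ i, (N i).FiniteIndex) ∧
      ∀ g, g ≠ 1 → ∃ i, g ∉ N i := by
  obtain ⟨e, he⟩ := exists_surjective_nat G
  have hseparate (i : ℕ) :
      ∃ N : Subgroup G, N.Normal ∧ N.FiniteIndex ∧ (e i ≠ 1 → e i ∉ N) := by
    by_cases hi : e i = 1
    · exact ⟨⊤, inferInstance, inferInstance, fun h => absurd hi h⟩
    · obtain ⟨N, hnormal, hindex, hN⟩ := hrf _ hi
      exact ⟨N, hnormal, hindex, fun _ => hN⟩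
  choose N hnormal hindex hN using hseparate
  refine ⟨N, hnormal, hindex, fun g hg => ?_⟩
  obtain ⟨i, rfl⟩ := he g
  exact ⟨i, hN i hg⟩

lemma smul_quotient_ne_of_notMem {G : Type*} [Group G] {N : Subgroup G} [N.Normal] {g : G}
    (hg : g ∉ N) (q : G ⧸ N) : g • q ≠ q := by
  intro hq
  have hmul : (g : G ⧸ N) * q = q := by
    induction q using QuotientGroup.induction_on with | H a => exact hq
  exact hg ((QuotientGroup.eq_one_iff g).1 (mul_eq_right.1 hmul))

theorem residually_finite_nonamenable_has_nonhyperfinite_modular_action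
    {G : Type} [Group G] [Countable G]
    -- `G` is residually finite
    (hrf : ∀ g : G, g ≠ 1 → ∃ N : Subgroup G, N.Normal ∧ N.FiniteIndex ∧ g ∉ N)
    -- `G` is not amenable
    (hna : ¬ ReiterAmenable G) :
    ∃ (V : Type) (_ : Countable V) (T : SimpleGraph V) (_ : T.IsTree)
      (φ : G →* Equiv.Perm V)
      (hact : ∀ (g : G) (v w : V), T.Adj v w ↔ T.Adj (φ g v) (φ g w))
      (r : V),
      -- the action is rooted: it fixes the vertex `r`
      (∀ g : G, φ g r = r) ∧
      ∃ μ : @Measure (Bdry T) (bdryMSexp T),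
        -- `μ` is a Borel probability measure on `∂T`
        μ Set.univ = 1 ∧
        -- the boundary action preserves `μ`
        (∀ (g : G) (s : Set (Bdry T)), MeasurableSet[bdryMSexp T] s →
          μ (permBdrySmul T φ hact g ⁻¹' s) = μ s) ∧
        -- the boundary action is free
        (∀ g : G, g ≠ 1 → ∀ x : Bdry T, permBdrySmul T φ hact g x ≠ x) ∧
        -- the boundary orbit equivalence relation is not μ-hyperfinite
        ¬ @MuHyperfinite (Bdry T) (bdryMSexp T)
            (fun x y => ∃ g : G, permBdrySmul T φ hact g x = y) μ := by
  obtain ⟨N, hnormal, hindex, hN⟩ := exists_nat_subgroup_separating hrf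
  obtain ⟨μ, hμ, hinv⟩ :=
    exists_invariant_isProbabilityMeasure_bdry_seqTree (α := fun i => G ⧸ N i) (G := G)
  have hfree : ∀ g : G, g ≠ 1 → ∀ x : Bdry (seqTree fun i => G ⧸ N i), g • x ≠ x := by
    intro g hg
    obtain ⟨i, hi⟩ := hN g hg
    exact smul_bdry_seqTree_ne ⟨i, smul_quotient_ne_of_notMem hi⟩
  refine ⟨SeqVertex fun i => G ⧸ N i, inferInstance, seqTree _, isTree_seqTree,
    MulAction.toPermHom G _, seqTree_adj_iff_toPermHom, SeqVertex.root _, SeqVertex.smul_root,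
    μ, measure_univ, fun g _ hs => hinv.measure_preimage_smul g hs, hfree, fun hE => ?_⟩
  refine hna (reiterAmenable_of_muHyperfinite (μ := μ) (.of_forall fun x g hx => ?_) hE)
  exact of_not_not fun hg => hfree g hg x hx
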